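/- arXiv:2201.10418 — 2 statements merged into one kernel-verified Lean document; each statement's English description precedes it below -/
import Mathlib

section
/- Let m ≥ 3. No 0-randomly dictatorial SDS that can be represented as a convex combination of unilaterals is β-ex post efficient for any β < 1/m; that is, for every such SDS f there exist a profile R and an alternative x that is Pareto-dominated in R such that f(R,x) ≥ 1/m. -/
open Finset

noncomputable section

/-- A preference profile: each voter's strict linear order on the `m`
alternatives is encoded as a ranking permutation, where `R i x` is the rank of
alternative `x` for voter `i` (rank `0` = most preferred). Voter `i` strictly
prefers `x` to `y` iff `R i x < R i y`. -/
abbrev Profile (n m : ℕ) := Fin n → Equiv.Perm (Fin m)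

/-- `F R x` is the probability that the social decision scheme `F` assigns to
alternative `x` at profile `R`; `IsSDS F` says every `F R` is a lottery. -/
def IsSDS {n m : ℕ} (F : Profile n m → Fin m → ℝ) : Prop :=
  (∀ R x, 0 ≤ F R x) ∧ ∀ R, ∑ x, F R x = 1

/-- Stochastic-dominance preference of voter `i` (with preferences as in `R`):
lottery `p` is weakly preferred to lottery `q`. -/
def SDPref {n m : ℕ} (R : Profile n m) (i : Fin n) (p q : Fin m → ℝ) : Prop :=
  ∀ x : Fin m,
    ∑ y ∈ univ.filter (fun y => R i y < R i x), q y ≤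
      ∑ y ∈ univ.filter (fun y => R i y < R i x), p y

/-- Strategyproofness: the truthful outcome is SD-preferred to any outcome
obtainable by a unilateral deviation. -/
def Strategyproof {n m : ℕ} (F : Profile n m → Fin m → ℝ) : Prop :=
  ∀ (R R' : Profile n m) (i : Fin n),
    (∀ j, j ≠ i → R j = R' j) → SDPref R i (F R) (F R')

/-- Anonymity: permuting the voters does not change the outcome. -/
def Anonymous {n m : ℕ} (F : Profile n m → Fin m → ℝ) : Prop :=
  ∀ (π : Equiv.Perm (Fin n)) (R : Profile n m), F (fun i => R (π i)) = F R

/-- The profile obtained from `R` by relabeling the alternatives by `τ`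
(in `relabel τ R`, alternative `τ x` gets the rank that `x` has in `R`). -/
def relabel {n m : ℕ} (τ : Equiv.Perm (Fin m)) (R : Profile n m) : Profile n m :=
  fun i => τ.symm.trans (R i)

/-- Neutrality: relabeling the alternatives permutes the outcome accordingly. -/
def Neutral {n m : ℕ} (F : Profile n m → Fin m → ℝ) : Prop :=
  ∀ (τ : Equiv.Perm (Fin m)) (R : Profile n m) (x : Fin m),
    F (relabel τ R) (τ x) = F R x

/-- The supporting size `n_{xy}(R)`: the number of voters preferring `x` to `y`. -/
def suppSize {n m : ℕ} (R : Profile n m) (x y : Fin m) : ℕ :=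
  (univ.filter (fun i => R i x < R i y)).card

/-- `x` is the Condorcet winner of `R`. -/
def CondorcetWinner {n m : ℕ} (R : Profile n m) (x : Fin m) : Prop :=
  ∀ y, y ≠ x → suppSize R y x < suppSize R x y

/-- `α`-Condorcet-consistency. -/
def CondorcetConsistent {n m : ℕ} (F : Profile n m → Fin m → ℝ) (α : ℝ) : Prop :=
  ∀ R x, CondorcetWinner R x → α ≤ F R x

/-- `x` is Pareto-dominated in `R`. -/
def ParetoDominated {n m : ℕ} (R : Profile n m) (x : Fin m) : Prop :=
  ∃ y, ∀ i, R i y < R i x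

/-- `β`-ex post efficiency. -/
def ExPostEff {n m : ℕ} (F : Profile n m → Fin m → ℝ) (β : ℝ) : Prop :=
  ∀ R x, ParetoDominated R x → F R x ≤ β

/-- The probability that the dictatorial SDS of voter `i` assigns to `x`:
`1` if `x` is voter `i`'s most preferred alternative and `0` otherwise. -/
def dictProb {n m : ℕ} (R : Profile n m) (i : Fin n) (x : Fin m) : ℝ :=
  if ∀ y, R i x ≤ R i y then 1 else 0

/-- `d` is a random dictatorship. -/
def IsRandDict {n m : ℕ} (d : Profile n m → Fin m → ℝ) : Prop :=
  ∃ δ : Fin n → ℝ, (∀ i, 0 ≤ δ i) ∧ ∑ i, δ i = 1 ∧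
    ∀ R x, d R x = ∑ i, δ i * dictProb R i x

/-- `F` can be written as `γ d + (1 - γ) g` with `d` a random dictatorship and
`g` a strategyproof SDS. -/
def DecomposesAt {n m : ℕ} (F : Profile n m → Fin m → ℝ) (γ : ℝ) : Prop :=
  ∃ d g : Profile n m → Fin m → ℝ, IsRandDict d ∧ IsSDS g ∧ Strategyproof g ∧
    ∀ R x, F R x = γ * d R x + (1 - γ) * g R x

/-- `F` is `γ`-randomly dictatorial: `γ ∈ [0,1]` is the maximal value admitting
a decomposition `F = γ d + (1 - γ) g` as above. -/
def RandDictDegree {n m : ℕ} (F : Profile n m → Fin m → ℝ) (γ : ℝ) : Prop :=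
  0 ≤ γ ∧ γ ≤ 1 ∧ DecomposesAt F γ ∧
    ∀ γ', 0 ≤ γ' → γ' ≤ 1 → DecomposesAt F γ' → γ' ≤ γ

/-- The profile `R^{i:yx}` obtained from `R` by swapping `x` and `y` in voter
`i`'s preference relation (used when `x` is ranked directly above `y`). -/
def swapTop {n m : ℕ} (R : Profile n m) (i : Fin n) (x y : Fin m) : Profile n m :=
  Function.update R i ((R i).trans (Equiv.swap (R i x) (R i y)))

/-- The weight vector `b` defining the randomized Copeland rule:
`b k = 2/(m(m-1))` for `k > n/2`, `b k = 1/(m(m-1))` for `k = n/2`, `b k = 0`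
for `k < n/2`. -/
def copelandWeight (n m : ℕ) (k : ℕ) : ℝ :=
  if n < 2 * k then 2 / ((m : ℝ) * ((m : ℝ) - 1))
  else if 2 * k = n then 1 / ((m : ℝ) * ((m : ℝ) - 1))
  else 0

/-- The randomized Copeland rule `f_C(R, x) = ∑_{y ≠ x} b_{n_{xy}(R)}`. -/
def randCopeland (n m : ℕ) : Profile n m → Fin m → ℝ :=
  fun R x => ∑ y ∈ univ.filter (fun y => y ≠ x), copelandWeight n m (suppSize R x y)

/-- A point voting SDS, given by a scoring vector `a` (indexed by ranks
`0, …, m-1`, i.e. `a k` is the score of the `(k+1)`-st ranked alternative). -/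
structure PointVoting (n m : ℕ) where
  a : ℕ → ℝ
  mono : ∀ k l : ℕ, k ≤ l → l < m → a l ≤ a k
  nonneg : ∀ k : ℕ, k < m → 0 ≤ a k
  sum_eq : ∑ k ∈ Finset.range m, a k = 1 / (n : ℝ)

/-- The value of a point voting SDS. -/
def pvVal {n m : ℕ} (pv : PointVoting n m) : Profile n m → Fin m → ℝ :=
  fun R x => ∑ i, pv.a (R i x : ℕ)

/-- A supporting size SDS, given by a vector `b` indexed by supporting sizes
`0, …, n`. -/
structure SupportingSize (n m : ℕ) where
  b : ℕ → ℝ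
  mono : ∀ k l : ℕ, k ≤ l → l ≤ n → b k ≤ b l
  nonneg : ∀ k : ℕ, k ≤ n → 0 ≤ b k
  pair_eq : ∀ k : ℕ, k ≤ n → b k + b (n - k) = 2 / ((m : ℝ) * ((m : ℝ) - 1))

/-- The value of a supporting size SDS. -/
def ssVal {n m : ℕ} (S : SupportingSize n m) : Profile n m → Fin m → ℝ :=
  fun R x => ∑ y ∈ univ.filter (fun y => y ≠ x), S.b (suppSize R x y)

/-- A duple: a strategyproof SDS that puts positive probability on at most two
fixed alternatives. -/
def IsDuple {n m : ℕ} (g : Profile n m → Fin m → ℝ) : Prop :=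
  IsSDS g ∧ Strategyproof g ∧ ∃ x y : Fin m, ∀ R z, z ≠ x → z ≠ y → g R z = 0

/-- A unilateral: a strategyproof SDS that depends only on the preferences of a
single fixed voter. -/
def IsUnilateral {n m : ℕ} (g : Profile n m → Fin m → ℝ) : Prop :=
  IsSDS g ∧ Strategyproof g ∧
    ∃ i : Fin n, ∀ R R' : Profile n m, R i = R' i → g R = g R'

/-- `F` is a convex combination of SDSs satisfying the property `P`. -/
def MixOf {n m : ℕ} (P : (Profile n m → Fin m → ℝ) → Prop)
    (F : Profile n m → Fin m → ℝ) : Prop :=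
  ∃ (K : ℕ) (w : Fin K → ℝ) (g : Fin K → Profile n m → Fin m → ℝ),
    (∀ k, 0 ≤ w k) ∧ ∑ k, w k = 1 ∧ (∀ k, P (g k)) ∧
    ∀ R x, F R x = ∑ k, w k * g k R x

/-- The uniform random dictatorship. -/
def uniformRD (n m : ℕ) : Profile n m → Fin m → ℝ :=
  fun R x => (1 / (n : ℝ)) * ∑ i, dictProb R i x

/-- The uniform lottery. -/
def uniformLottery (n m : ℕ) : Profile n m → Fin m → ℝ :=
  fun _ _ => 1 / (m : ℝ)

/-!
A unilateral is determined by the function `q U` giving the largest probability that its voter can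
secure for a set `U` of alternatives; `q` is monotone and submodular, and a ranking that puts `U`
on top attains `q U`. Let `γ` be the least overlap `q {a} + q {b} - q {a, b}` of two distinct
alternatives. Subtracting `γ` times the voter's dictatorship leaves a strategyproof rule of total
mass `1 - γ` whose own `q` has a pair with zero overlap. For such a `q`, submodularity forces the
marginals `q {x, y} - q {y}`, summed over the `m * (m - 1)` ordered pairs, to be at least
`(m - 1) * (1 - γ)`. A marginal is the probability of `x` when everybody ranks `y` first and `x`
second. Both sides are linear in the rule, so the bound passes to convex combinations, and some `x`
dominated by `y` gets probability at least `(1 - γ) / m`.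
-/

section Submodular

variable {α : Type*} [DecidableEq α] {q : Finset α → ℝ}

/-- Submodularity of a real-valued set function, in its lattice form. -/
def IsSubmodular (q : Finset α → ℝ) : Prop :=
  ∀ U V, q (U ∪ V) + q (U ∩ V) ≤ q U + q V

lemma IsSubmodular.marginal_anti (hsub : IsSubmodular q) (hmono : Monotone q) {U V : Finset α}
    (hUV : U ⊆ V) (z : α) : q (insert z V) - q V ≤ q (insert z U) - q U := by
  by_cases hz : z ∈ V
  · have := hmono (subset_insert z U)
    rw [insert_eq_of_mem hz]
    linarith
  · have := hsub (insert z U) V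
    rw [insert_union, union_eq_right.2 hUV, insert_inter_of_notMem hz, inter_eq_left.2 hUV] at this
    linarith

lemma IsSubmodular.sub_le_sum_marginal (hsub : IsSubmodular q) (hmono : Monotone q)
    {U V : Finset α} (hUV : U ⊆ V) (Z : Finset α) :
    q (Z ∪ V) - q V ≤ ∑ z ∈ Z, (q (insert z U) - q U) := by
  induction Z using Finset.induction_on with
  | empty => simp
  | insert z Z hz ih =>
    rw [sum_insert hz, insert_union]
    have := hsub.marginal_anti hmono (hUV.trans (subset_union_right (s₁ := Z))) z
    linarith

variable {a b : α}

lemma IsSubmodular.le_sum_cross_marginals (hsub : IsSubmodular q)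
    (hoverlap : q {a} + q {b} ≤ q {a, b}) (hab : a ≠ b) (z : α) :
    2 * q {z, a, b} - q {a, b} ≤
      (q {a, z} - q {z}) + (q {b, z} - q {z}) + (q {z, a} - q {a}) + (q {z, b} - q {b}) := by
  have hunion : ({z, a} ∪ {z, b} : Finset α) = {z, a, b} := by grind
  have hinter : ({z, a} ∩ {z, b} : Finset α) = {z} := by grind
  have := hsub {z, a} {z, b}
  rw [hunion, hinter] at this
  rw [pair_comm a z, pair_comm b z]
  linarith

variable [Fintype α]

lemma IsSubmodular.le_sum_marginals (hsub : IsSubmodular q) (hmono : Monotone q) (hab : a ≠ b)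
    (hoverlap : q {a} + q {b} ≤ q {a, b}) :
    ((Fintype.card α : ℝ) - 1) * q univ ≤ ∑ y, ∑ x, (q {x, y} - q {y}) := by
  set D : α → α → ℝ := fun y x => q {x, y} - q {y} with hD
  set Z : Finset α := {a, b}ᶜ with hZ
  have hcard : (Z.card : ℝ) = Fintype.card α - 2 := by
    rw [hZ, card_compl, card_pair hab, Nat.cast_sub (card_pair hab ▸ card_le_univ _), Nat.cast_two]
  have hsplit (f : α → ℝ) : ∑ x, f x = f a + f b + ∑ z ∈ Z, f z := by
    rw [← sum_add_sum_compl {a, b}, sum_pair hab]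
  have htotal : ∑ y, ∑ x, D y x =
      D b a + D a b + ∑ z ∈ Z, (D z a + D z b + D a z + D b z + ∑ x ∈ Z, D z x) := by
    have hdiag (x : α) : D x x = 0 := by simp [hD]
    rw [hsplit]
    simp only [hsplit (D _), sum_add_distrib, hdiag]
    ring
  have hrest (z : α) :
      q univ + (q {z, a, b} - q {a, b}) ≤ D z a + D z b + D a z + D b z + ∑ x ∈ Z, D z x := by
    have hrow := hsub.sub_le_sum_marginal hmono (U := {z}) (V := {z, a, b}) (by simp) Z
    rw [union_insert, hZ, union_comm, union_compl, insert_eq_of_mem (mem_univ z)] at hrow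
    have := hsub.le_sum_cross_marginals hoverlap hab z
    simp only [hD]
    linarith
  have hpair : 2 * q {a, b} - q {a} - q {b} = D b a + D a b := by
    simp only [hD, pair_comm b a]
    ring
  have hsum_insert := hsub.sub_le_sum_marginal hmono (U := {a, b}) subset_rfl Z
  rw [union_comm, union_compl] at hsum_insert
  calc ((Fintype.card α : ℝ) - 1) * q univ
      ≤ (D b a + D a b) + ∑ z ∈ Z, (q univ + (q {z, a, b} - q {a, b})) := by
        rw [sum_add_distrib, sum_const, nsmul_eq_mul, hcard]
        linarith
    _ ≤ ∑ y, ∑ x, D y x := by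
        rw [htotal]
        exact add_le_add_right (sum_le_sum fun z _ => hrest z) _

end Submodular

section Rankings

variable {m : ℕ} {P : Equiv.Perm (Fin m)} {U V : Finset (Fin m)}

lemma univ_offDiag_nonempty (hm : 2 ≤ m) : (univ : Finset (Fin m)).offDiag.Nonempty := by
  have : Nontrivial (Fin m) := Fin.nontrivial_iff_two_le.2 hm
  obtain ⟨a, b, hab⟩ := exists_pair_ne (Fin m)
  exact ⟨(a, b), by simpa using hab⟩

/-- `U` consists of the `U.card` best alternatives of the ranking `P`. -/
def IsTopSet (P : Equiv.Perm (Fin m)) (U : Finset (Fin m)) : Prop :=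
  ∀ x ∈ U, ∀ y, P y ≤ P x → y ∈ U

lemma isTopSet_empty : IsTopSet P ∅ := by simp [IsTopSet]

lemma isTopSet_univ : IsTopSet P univ := by simp [IsTopSet]

lemma isTopSet_filter_lt (P : Equiv.Perm (Fin m)) (x : Fin m) :
    IsTopSet P (univ.filter fun y => P y < P x) := by
  intro z hz y hyz
  simp only [mem_filter_univ] at hz ⊢
  exact hyz.trans_lt hz

lemma IsTopSet.eq_univ_or_eq_filter_lt (hU : IsTopSet P U) :
    U = univ ∨ ∃ x, U = univ.filter fun y => P y < P x := by
  rcases Uᶜ.eq_empty_or_nonempty with hempty | hne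
  · exact Or.inl (compl_eq_empty_iff U |>.1 hempty)
  · obtain ⟨x, hx, hmin⟩ := exists_min_image Uᶜ P hne
    refine Or.inr ⟨x, ext fun y => ?_⟩
    rw [mem_filter_univ]
    constructor
    · exact fun hy => not_le.1 fun hxy => mem_compl.1 hx (hU y hy x hxy)
    · exact fun hy => by_contra fun hyU => (hmin y (mem_compl.2 hyU)).not_gt hy

lemma exists_isTopSet_of_subset (hUV : U ⊆ V) :
    ∃ P : Equiv.Perm (Fin m), IsTopSet P U ∧ IsTopSet P V := by
  let level (x : Fin m) : ℕ := if x ∈ U then 0 else if x ∈ V then 1 else 2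
  have hlevel {x y : Fin m} (h : (Tuple.sort level).symm y ≤ (Tuple.sort level).symm x) :
      level y ≤ level x := by
    simpa using Tuple.monotone_sort level h
  refine ⟨(Tuple.sort level).symm, fun x hx y hy => ?_, fun x hx y hy => ?_⟩ <;>
    · have := hlevel hy
      grind

lemma exists_isTopSet (U : Finset (Fin m)) : ∃ P : Equiv.Perm (Fin m), IsTopSet P U :=
  (exists_isTopSet_of_subset (subset_refl U)).imp fun _ h => h.1

/-- A ranking with `y` first and `x` second; the remaining positions are an arbitrary choice. -/
def topTwo (y x : Fin m) : Equiv.Perm (Fin m) :=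
  (exists_isTopSet_of_subset (U := {y}) (V := {x, y}) (by simp)).choose

lemma isTopSet_topTwo_singleton (y x : Fin m) : IsTopSet (topTwo y x) {y} :=
  (exists_isTopSet_of_subset (U := {y}) (V := {x, y}) (by simp)).choose_spec.1

lemma isTopSet_topTwo_pair (y x : Fin m) : IsTopSet (topTwo y x) {x, y} :=
  (exists_isTopSet_of_subset (U := {y}) (V := {x, y}) (by simp)).choose_spec.2

lemma topTwo_apply_lt {x y : Fin m} (hyx : y ≠ x) : topTwo y x y < topTwo y x x := by
  by_contra! hle
  have := isTopSet_topTwo_singleton y x y (mem_singleton_self y) x hle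
  exact hyx (mem_singleton.1 this).symm

section TopRule

variable [NeZero m]

lemma IsTopSet.symm_zero_mem (hU : IsTopSet P U) (hne : U.Nonempty) : P.symm 0 ∈ U :=
  let ⟨x, hx⟩ := hne
  hU x hx _ (by simp)

lemma isTopSet_singleton_symm_zero (P : Equiv.Perm (Fin m)) : IsTopSet P {P.symm 0} := by
  intro x hx y hyx
  rw [mem_singleton, Equiv.eq_symm_apply] at hx ⊢
  exact nonpos_iff_eq_zero.1 (hx ▸ hyx)

/-- The dictatorial rule of one voter with ranking `P`, who elects the alternative of rank `0`. -/
def topRule (P : Equiv.Perm (Fin m)) : Fin m → ℝ := Pi.single (P.symm 0) 1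

lemma dictProb_eq_topRule {n : ℕ} (R : Profile n m) (i : Fin n) :
    dictProb R i = topRule (R i) := by
  funext x
  have htop : (∀ y, R i x ≤ R i y) ↔ x = (R i).symm 0 := by
    rw [Equiv.eq_symm_apply]
    exact ⟨fun h => by simpa using h ((R i).symm 0), fun h y => by simp [h]⟩
  simp only [dictProb, topRule, htop, Pi.single_apply]

lemma sum_topRule (P : Equiv.Perm (Fin m)) (U : Finset (Fin m)) :
    ∑ x ∈ U, topRule P x = if P.symm 0 ∈ U then 1 else 0 := by
  simp [topRule]

lemma IsTopSet.sum_topRule (hU : IsTopSet P U) (hne : U.Nonempty) :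
    ∑ x ∈ U, topRule P x = 1 := by
  rw [_root_.sum_topRule, if_pos (hU.symm_zero_mem hne)]

end TopRule

end Rankings

section Truthful

variable {m : ℕ} {h : Equiv.Perm (Fin m) → Fin m → ℝ} {c : ℝ}

/-- `h` assigns to the ranking of a single voter a measure on the alternatives of total mass `c`,
and truth-telling maximizes the mass of every set the voter ranks on top. The mass is a parameter
because subtracting a multiple of the dictatorship lowers it. -/
structure IsTruthful (h : Equiv.Perm (Fin m) → Fin m → ℝ) (c : ℝ) : Prop where
  nonneg : ∀ P x, 0 ≤ h P x
  sum_eq : ∀ P, ∑ x, h P x = c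
  sum_le : ∀ P U, IsTopSet P U → ∀ P', ∑ x ∈ U, h P' x ≤ ∑ x ∈ U, h P x

/-- The largest mass that the voter can secure for `U` by reporting some ranking. -/
def maxMass (h : Equiv.Perm (Fin m) → Fin m → ℝ) (U : Finset (Fin m)) : ℝ :=
  ⨆ P, ∑ x ∈ U, h P x

lemma sum_le_maxMass (h : Equiv.Perm (Fin m) → Fin m → ℝ) (P : Equiv.Perm (Fin m))
    (U : Finset (Fin m)) : ∑ x ∈ U, h P x ≤ maxMass h U :=
  le_ciSup (f := fun P => ∑ x ∈ U, h P x) (Set.finite_range _).bddAbove P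

namespace IsTruthful

lemma mass_nonneg (hh : IsTruthful h c) : 0 ≤ c :=
  hh.sum_eq 1 ▸ sum_nonneg fun x _ => hh.nonneg 1 x

lemma maxMass_eq_sum (hh : IsTruthful h c) {P : Equiv.Perm (Fin m)} {U : Finset (Fin m)}
    (hU : IsTopSet P U) : maxMass h U = ∑ x ∈ U, h P x :=
  le_antisymm (ciSup_le (hh.sum_le P U hU)) (sum_le_maxMass h P U)

lemma maxMass_empty (hh : IsTruthful h c) : maxMass h ∅ = 0 := by
  rw [hh.maxMass_eq_sum (isTopSet_empty (P := 1)), sum_empty]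

lemma maxMass_univ (hh : IsTruthful h c) : maxMass h univ = c := by
  rw [hh.maxMass_eq_sum (isTopSet_univ (P := 1)), hh.sum_eq]

lemma monotone_maxMass (hh : IsTruthful h c) : Monotone (maxMass h) := fun _ V hUV =>
  ciSup_le fun P => (sum_le_sum_of_subset_of_nonneg hUV fun x _ _ => hh.nonneg P x).trans
    (sum_le_maxMass h P V)

lemma isSubmodular_maxMass (hh : IsTruthful h c) : IsSubmodular (maxMass h) := by
  intro U V
  obtain ⟨P, hinter, hunion⟩ := exists_isTopSet_of_subset (inter_subset_union (s := U) (t := V))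
  rw [hh.maxMass_eq_sum hunion, hh.maxMass_eq_sum hinter, sum_union_inter]
  exact add_le_add (sum_le_maxMass h P U) (sum_le_maxMass h P V)

lemma apply_topTwo (hh : IsTruthful h c) {x y : Fin m} (hyx : y ≠ x) :
    h (topTwo y x) x = maxMass h {x, y} - maxMass h {y} := by
  rw [hh.maxMass_eq_sum (isTopSet_topTwo_pair y x),
    hh.maxMass_eq_sum (isTopSet_topTwo_singleton y x), sum_pair hyx.symm, sum_singleton,
    add_sub_cancel_right]

lemma apply_symm_zero [NeZero m] (hh : IsTruthful h c) (P : Equiv.Perm (Fin m)) :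
    h P (P.symm 0) = maxMass h {P.symm 0} := by
  rw [hh.maxMass_eq_sum (isTopSet_singleton_symm_zero P), sum_singleton]

lemma le_sum_apply_topTwo (hh : IsTruthful h c) {a b : Fin m} (hab : a ≠ b)
    (hoverlap : maxMass h {a} + maxMass h {b} ≤ maxMass h {a, b}) :
    ((m : ℝ) - 1) * c ≤ ∑ p ∈ univ.offDiag, h (topTwo p.1 p.2) p.2 := by
  have hoffDiag : ∑ y, ∑ x, (maxMass h {x, y} - maxMass h {y}) =
      ∑ p ∈ univ.offDiag, (maxMass h {p.2, p.1} - maxMass h {p.1}) := by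
    rw [← sum_product', ← diag_union_offDiag, sum_union (disjoint_diag_offDiag _), sum_diag]
    simp
  have hle := hh.isSubmodular_maxMass.le_sum_marginals hh.monotone_maxMass hab hoverlap
  rw [hh.maxMass_univ, Fintype.card_fin, hoffDiag] at hle
  refine hle.trans_eq (sum_congr rfl fun p hp => ?_)
  rw [hh.apply_topTwo (mem_offDiag.1 hp).2.2]

end IsTruthful

variable {γ : ℝ} [NeZero m]

lemma isTruthful_topRule : IsTruthful (topRule (m := m)) 1 where
  nonneg P x := by
    rw [topRule, Pi.single_apply]
    split_ifs <;> norm_num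
  sum_eq P := by simp [sum_topRule]
  sum_le P U hU P' := by
    rcases U.eq_empty_or_nonempty with rfl | hne
    · simp
    · rw [hU.sum_topRule hne, sum_topRule]
      split_ifs <;> norm_num

lemma IsTruthful.exists_eq_smul (hh : IsTruthful h c) :
    ∃ g, IsTruthful g 1 ∧ h = c • g := by
  rcases hh.mass_nonneg.eq_or_lt with rfl | hc
  · refine ⟨topRule, isTruthful_topRule, ?_⟩
    funext P x
    simpa using (sum_eq_zero_iff_of_nonneg fun x _ => hh.nonneg P x).1 (hh.sum_eq P) x (mem_univ x)
  · refine ⟨c⁻¹ • h, ⟨fun P x => ?_, fun P => ?_, fun P U hU P' => ?_⟩, ?_⟩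
    · exact mul_nonneg (inv_nonneg.2 hc.le) (hh.nonneg P x)
    · simp only [Pi.smul_apply, ← smul_sum, hh.sum_eq]
      exact inv_mul_cancel₀ hc.ne'
    · simp only [Pi.smul_apply, ← smul_sum]
      exact smul_le_smul_of_nonneg_left (hh.sum_le P U hU P') (inv_nonneg.2 hc.le)
    · rw [smul_inv_smul₀ hc.ne']

lemma sum_sub_smul_topRule (h : Equiv.Perm (Fin m) → Fin m → ℝ) (γ : ℝ) (P : Equiv.Perm (Fin m))
    (U : Finset (Fin m)) :
    ∑ x ∈ U, (h - γ • topRule : Equiv.Perm (Fin m) → Fin m → ℝ) P x =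
      ∑ x ∈ U, h P x - γ * ∑ x ∈ U, topRule P x := by
  simp [sum_sub_distrib, mul_sum]

lemma IsTruthful.sum_le_of_symm_zero_notMem (hh : IsTruthful h c) {P : Equiv.Perm (Fin m)}
    {U : Finset (Fin m)} (hP : P.symm 0 ∉ U) {z : Fin m} (hz : z ∈ U)
    (hγ : γ ≤ maxMass h {P.symm 0} + maxMass h {z} - maxMass h {P.symm 0, z}) :
    ∑ x ∈ U, h P x ≤ maxMass h U - γ := by
  have hinsert := sum_le_maxMass h P (insert (P.symm 0) U)
  rw [sum_insert hP, hh.apply_symm_zero] at hinsert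
  have := hh.isSubmodular_maxMass.marginal_anti hh.monotone_maxMass
    (singleton_subset_iff.2 hz) (P.symm 0)
  linarith

lemma IsTruthful.sub_smul_topRule (hm : 2 ≤ m) (hh : IsTruthful h c)
    (hγ : ∀ a b, a ≠ b → γ ≤ maxMass h {a} + maxMass h {b} - maxMass h {a, b}) :
    IsTruthful (h - γ • topRule) (c - γ) where
  nonneg P x := by
    rcases eq_or_ne x (P.symm 0) with rfl | hx
    · have : Nontrivial (Fin m) := Fin.nontrivial_iff_two_le.2 hm
      obtain ⟨y, hy⟩ := exists_ne (P.symm 0)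
      have := hh.monotone_maxMass (subset_insert (P.symm 0) {y})
      have hle : γ ≤ h P (P.symm 0) := by
        linarith [hγ _ _ hy.symm, hh.apply_symm_zero P]
      simpa [topRule] using hle
    · simpa [topRule, hx] using hh.nonneg P x
  sum_eq P := by
    rw [sum_sub_smul_topRule, hh.sum_eq, isTruthful_topRule.sum_eq, mul_one]
  sum_le P U hU P' := by
    rcases U.eq_empty_or_nonempty with rfl | ⟨z, hz⟩
    · simp
    rw [sum_sub_smul_topRule, sum_sub_smul_topRule, hU.sum_topRule ⟨z, hz⟩, sum_topRule]
    split_ifs with htop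
    · linarith [hh.sum_le P U hU P']
    · have hne : P'.symm 0 ≠ z := fun heq => htop (heq ▸ hz)
      have := hh.sum_le_of_symm_zero_notMem htop hz (hγ _ _ hne)
      linarith [hh.maxMass_eq_sum hU]

lemma IsTruthful.maxMass_sub_smul_topRule (hh : IsTruthful h c)
    (hres : IsTruthful (h - γ • topRule) (c - γ)) {U : Finset (Fin m)} (hne : U.Nonempty) :
    maxMass (h - γ • topRule) U = maxMass h U - γ := by
  obtain ⟨P, hU⟩ := exists_isTopSet U
  rw [hres.maxMass_eq_sum hU, hh.maxMass_eq_sum hU, sum_sub_smul_topRule, hU.sum_topRule hne,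
    mul_one]

lemma IsTruthful.exists_sub_smul_topRule (hm : 2 ≤ m) (hh : IsTruthful h c) :
    ∃ γ : ℝ, 0 ≤ γ ∧ IsTruthful (h - γ • topRule) (c - γ) ∧ ∃ a b, a ≠ b ∧
      maxMass (h - γ • topRule) {a} + maxMass (h - γ • topRule) {b} ≤
        maxMass (h - γ • topRule) {a, b} := by
  let overlap (p : Fin m × Fin m) : ℝ := maxMass h {p.1} + maxMass h {p.2} - maxMass h {p.1, p.2}
  obtain ⟨⟨a, b⟩, hab, hmin⟩ := exists_min_image univ.offDiag overlap (univ_offDiag_nonempty hm)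
  replace hab : a ≠ b := (mem_offDiag.1 hab).2.2
  have hres := hh.sub_smul_topRule hm (γ := overlap (a, b))
    fun x y hxy => hmin (x, y) (by simpa using hxy)
  refine ⟨overlap (a, b), ?_, hres, a, b, hab, ?_⟩
  · have := hh.isSubmodular_maxMass {a} {b}
    rw [← insert_eq, singleton_inter_of_notMem (notMem_singleton.2 hab), hh.maxMass_empty] at this
    simp only [overlap]
    linarith
  · rw [hh.maxMass_sub_smul_topRule hres (by simp), hh.maxMass_sub_smul_topRule hres (by simp),
      hh.maxMass_sub_smul_topRule hres (by simp)]
    simp only [overlap]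
    linarith

end Truthful

section SocialDecisionSchemes

variable {n m : ℕ}

lemma SDPref.sum_le {R : Profile n m} {i : Fin n} {p q : Fin m → ℝ} (hpref : SDPref R i p q)
    (hsum : ∑ x, q x = ∑ x, p x) {U : Finset (Fin m)} (hU : IsTopSet (R i) U) :
    ∑ x ∈ U, q x ≤ ∑ x ∈ U, p x := by
  rcases hU.eq_univ_or_eq_filter_lt with rfl | ⟨x, rfl⟩
  · exact hsum.le
  · exact hpref x

lemma IsUnilateral.exists_isTruthful {g : Profile n m → Fin m → ℝ} (hg : IsUnilateral g) :
    ∃ (i : Fin n) (h : Equiv.Perm (Fin m) → Fin m → ℝ), IsTruthful h 1 ∧ ∀ R, g R = h (R i) := by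
  obtain ⟨⟨hnonneg, hsum⟩, hsp, i, hi⟩ := hg
  refine ⟨i, fun P => g fun _ => P, ⟨fun P => hnonneg _, fun P => hsum _, ?_⟩,
    fun R => hi _ _ rfl⟩
  intro P U hU P'
  have hdev : g (Function.update (fun _ => P) i P') = g fun _ => P' := hi _ _ (by simp)
  have hpref := hsp (fun _ => P) (Function.update (fun _ => P) i P') i
    fun j hj => by rw [Function.update_of_ne hj]
  rw [hdev] at hpref
  exact hpref.sum_le ((hsum _).trans (hsum _).symm) hU

lemma IsTruthful.isSDS {h : Equiv.Perm (Fin m) → Fin m → ℝ} (hh : IsTruthful h 1) (i : Fin n) :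
    IsSDS fun R : Profile n m => h (R i) :=
  ⟨fun _ => hh.nonneg _, fun _ => hh.sum_eq _⟩

lemma IsTruthful.strategyproof {h : Equiv.Perm (Fin m) → Fin m → ℝ} {c : ℝ} (hh : IsTruthful h c)
    (i : Fin n) : Strategyproof fun R : Profile n m => h (R i) := by
  intro R R' j hR x
  rcases eq_or_ne i j with rfl | hij
  · exact hh.sum_le _ _ (isTopSet_filter_lt _ x) _
  · simp only [hR i hij, le_refl]

lemma isRandDict_dictProb (i : Fin n) : IsRandDict fun R : Profile n m => dictProb R i :=
  ⟨Pi.single i 1, fun j => by rw [Pi.single_apply]; split_ifs <;> norm_num, by simp,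
    fun R x => by simp [Pi.single_apply]⟩

/-- The total probability of the second-ranked alternative over the unanimous profiles that rank
`p.1` first and `p.2` second, for all ordered pairs `p` of distinct alternatives. -/
def runnerUpSum (F : Profile n m → Fin m → ℝ) : ℝ :=
  ∑ p ∈ univ.offDiag, F (fun _ => topTwo p.1 p.2) p.2

lemma runnerUpSum_sum_smul {ι : Type*} [Fintype ι] (w : ι → ℝ)
    (g : ι → Profile n m → Fin m → ℝ) :
    runnerUpSum (∑ k, w k • g k) = ∑ k, w k * runnerUpSum (g k) := by
  simp only [runnerUpSum, Finset.sum_apply, Pi.smul_apply, smul_eq_mul, mul_sum]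
  exact sum_comm

lemma IsUnilateral.exists_decomposesAt (hm : 2 ≤ m) {g : Profile n m → Fin m → ℝ}
    (hg : IsUnilateral g) :
    ∃ γ, 0 ≤ γ ∧ γ ≤ 1 ∧ DecomposesAt g γ ∧ ((m : ℝ) - 1) * (1 - γ) ≤ runnerUpSum g := by
  have : NeZero m := ⟨by omega⟩
  obtain ⟨i, h, hh, hgh⟩ := hg.exists_isTruthful
  obtain ⟨γ, hγ, hres, a, b, hab, hoverlap⟩ := hh.exists_sub_smul_topRule hm
  obtain ⟨r, hr, hres_eq⟩ := hres.exists_eq_smul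
  refine ⟨γ, hγ, sub_nonneg.1 hres.mass_nonneg,
    ⟨fun R => dictProb R i, fun R => r (R i), isRandDict_dictProb i, hr.isSDS i,
      hr.strategyproof i, fun R x => ?_⟩,
    (hres.le_sum_apply_topTwo hab hoverlap).trans (sum_le_sum fun p _ => ?_)⟩
  · have := congrFun₂ hres_eq (R i) x
    simp only [Pi.sub_apply, Pi.smul_apply, smul_eq_mul] at this
    simp only [hgh, dictProb_eq_topRule]
    linarith
  · rw [hgh]
    exact sub_le_self _ (mul_nonneg hγ (isTruthful_topRule.nonneg _ _))

lemma convex_setOf_isRandDict : Convex ℝ {d : Profile n m → Fin m → ℝ | IsRandDict d} := by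
  rintro d ⟨δ, hδ, hδ_sum, hd⟩ d' ⟨δ', hδ', hδ'_sum, hd'⟩ s t hs ht hst
  refine ⟨s • δ + t • δ', fun i => ?_, ?_, fun R x => ?_⟩
  · exact add_nonneg (mul_nonneg hs (hδ i)) (mul_nonneg ht (hδ' i))
  · simp [sum_add_distrib, ← mul_sum, hδ_sum, hδ'_sum, hst]
  · simp [hd, hd', add_mul, sum_add_distrib, mul_sum, mul_assoc]

lemma convex_setOf_isSDS_and_strategyproof :
    Convex ℝ {g : Profile n m → Fin m → ℝ | IsSDS g ∧ Strategyproof g} := by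
  rintro g ⟨⟨hg, hg_sum⟩, hg_sp⟩ g' ⟨⟨hg', hg'_sum⟩, hg'_sp⟩ s t hs ht hst
  refine ⟨⟨fun R x => ?_, fun R => ?_⟩, fun R R' i hR x => ?_⟩
  · exact add_nonneg (mul_nonneg hs (hg R x)) (mul_nonneg ht (hg' R x))
  · simp [sum_add_distrib, ← mul_sum, hg_sum, hg'_sum, hst]
  · simp only [Pi.add_apply, Pi.smul_apply, smul_eq_mul, sum_add_distrib, ← mul_sum]
    exact add_le_add (mul_le_mul_of_nonneg_left (hg_sp R R' i hR x) hs)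
      (mul_le_mul_of_nonneg_left (hg'_sp R R' i hR x) ht)

lemma exists_mem_sum_smul_eq {E ι : Type*} [AddCommGroup E] [Module ℝ E] [Fintype ι] [Nonempty ι]
    {s : Set E} (hs : Convex ℝ s) {c : ι → ℝ} (hc : ∀ k, 0 ≤ c k) {z : ι → E}
    (hz : ∀ k, z k ∈ s) : ∃ x ∈ s, ∑ k, c k • z k = (∑ k, c k) • x := by
  rcases (sum_nonneg fun k _ => hc k : 0 ≤ ∑ k, c k).eq_or_lt with hzero | hpos
  · have hc_zero (k : ι) : c k = 0 :=
      (sum_eq_zero_iff_of_nonneg fun k _ => hc k).1 hzero.symm k (mem_univ k)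
    exact ⟨z (Classical.arbitrary ι), hz _, by simp [hc_zero]⟩
  · refine ⟨univ.centerMass c z, hs.centerMass_mem (fun k _ => hc k) hpos fun k _ => hz k, ?_⟩
    rw [centerMass, smul_inv_smul₀ hpos.ne']

lemma sum_mul_one_sub {ι : Type*} [Fintype ι] {w : ι → ℝ} (hw_sum : ∑ k, w k = 1) (γ : ι → ℝ) :
    ∑ k, w k * (1 - γ k) = 1 - ∑ k, w k * γ k := by
  simp only [mul_one_sub, sum_sub_distrib, hw_sum]

lemma decomposesAt_iff {F : Profile n m → Fin m → ℝ} {γ : ℝ} :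
    DecomposesAt F γ ↔ ∃ d g, IsRandDict d ∧ (IsSDS g ∧ Strategyproof g) ∧
      F = γ • d + (1 - γ) • g := by
  simp [DecomposesAt, funext_iff, and_assoc]

lemma decomposesAt_sum_smul {ι : Type*} [Fintype ι] {w : ι → ℝ} (hw : ∀ k, 0 ≤ w k)
    (hw_sum : ∑ k, w k = 1) {γ : ι → ℝ} (hγ : ∀ k, 0 ≤ γ k) (hγ' : ∀ k, γ k ≤ 1)
    {g : ι → Profile n m → Fin m → ℝ} (hg : ∀ k, DecomposesAt (g k) (γ k)) :
    DecomposesAt (∑ k, w k • g k) (∑ k, w k * γ k) := by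
  have : Nonempty ι := not_isEmpty_iff.1 fun _ => by simp at hw_sum
  choose d r hd hr hg_eq using fun k => decomposesAt_iff.1 (hg k)
  obtain ⟨d₀, hd₀, hd_sum⟩ := exists_mem_sum_smul_eq convex_setOf_isRandDict
    (fun k => mul_nonneg (hw k) (hγ k)) hd
  obtain ⟨r₀, hr₀, hr_sum⟩ := exists_mem_sum_smul_eq convex_setOf_isSDS_and_strategyproof
    (fun k => mul_nonneg (hw k) (sub_nonneg.2 (hγ' k))) hr
  refine decomposesAt_iff.2 ⟨d₀, r₀, hd₀, hr₀, ?_⟩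
  rw [← sum_mul_one_sub hw_sum, ← hd_sum, ← hr_sum, ← sum_add_distrib]
  refine sum_congr rfl fun k _ => ?_
  rw [hg_eq, smul_add, smul_smul, smul_smul]

lemma MixOf.exists_decomposesAt (hm : 2 ≤ m) {F : Profile n m → Fin m → ℝ}
    (hmix : MixOf IsUnilateral F) :
    ∃ γ, 0 ≤ γ ∧ γ ≤ 1 ∧ DecomposesAt F γ ∧ ((m : ℝ) - 1) * (1 - γ) ≤ runnerUpSum F := by
  obtain ⟨K, w, g, hw, hw_sum, hg, hF⟩ := hmix
  obtain rfl : F = ∑ k, w k • g k := by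
    funext R x
    simp [hF]
  choose γ hγ hγ' hdec hle using fun k => (hg k).exists_decomposesAt hm
  refine ⟨∑ k, w k * γ k, sum_nonneg fun k _ => mul_nonneg (hw k) (hγ k), ?_,
    decomposesAt_sum_smul hw hw_sum hγ hγ' hdec, ?_⟩
  · exact (sum_le_sum fun k _ => mul_le_of_le_one_right (hw k) (hγ' k)).trans_eq hw_sum
  calc ((m : ℝ) - 1) * (1 - ∑ k, w k * γ k)
      = ∑ k, w k * (((m : ℝ) - 1) * (1 - γ k)) := by
        rw [← sum_mul_one_sub hw_sum, mul_sum]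
        exact sum_congr rfl fun k _ => mul_left_comm _ _ _
    _ ≤ ∑ k, w k * runnerUpSum (g k) :=
        sum_le_sum fun k _ => mul_le_mul_of_nonneg_left (hle k) (hw k)
    _ = runnerUpSum (∑ k, w k • g k) := (runnerUpSum_sum_smul w g).symm

lemma exists_paretoDominated_le (hm : 2 ≤ m) {F : Profile n m → Fin m → ℝ} {s : ℝ}
    (hs : ((m : ℝ) - 1) * s ≤ runnerUpSum F) :
    ∃ R x, ParetoDominated R x ∧ s / m ≤ F R x := by
  have hm_ne : (m : ℝ) ≠ 0 := by positivity
  have hcard : ((univ : Finset (Fin m)).offDiag.card : ℝ) = m * (m - 1) := by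
    rw [offDiag_card, Nat.cast_sub (Nat.le_mul_self _), Nat.cast_mul, card_univ, Fintype.card_fin]
    ring
  have hconst : ∑ _p ∈ (univ : Finset (Fin m)).offDiag, s / m ≤ runnerUpSum F := by
    rw [sum_const, nsmul_eq_mul, hcard]
    convert hs using 1
    field_simp
  obtain ⟨⟨y, x⟩, hp, hle⟩ := exists_le_of_sum_le (univ_offDiag_nonempty hm) hconst
  exact ⟨fun _ => topTwo y x, x, ⟨y, fun _ => topTwo_apply_lt (mem_offDiag.1 hp).2.2⟩, hle⟩

end SocialDecisionSchemes

theorem unilateralMix_zeroRandDict_not_expost_general {n m : ℕ} (hm : 2 ≤ m)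
    {F : Profile n m → Fin m → ℝ} {γ : ℝ} (hmix : MixOf IsUnilateral F)
    (hrd : RandDictDegree F γ) :
    ∃ (R : Profile n m) (x : Fin m), ParetoDominated R x ∧ (1 - γ) / m ≤ F R x := by
  obtain ⟨γ', hγ'_nonneg, hγ'_le, hdec, hsum⟩ := hmix.exists_decomposesAt hm
  obtain ⟨R, x, hdom, hle⟩ := exists_paretoDominated_le hm hsum
  have hγ'γ : γ' ≤ γ := hrd.2.2.2 γ' hγ'_nonneg hγ'_le hdec
  exact ⟨R, x, hdom, le_trans (by gcongr) hle⟩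

/-- For `m ≥ 3`, no `0`-randomly dictatorial SDS that is a convex
combination of unilaterals is `β`-ex post efficient for any `β < 1/m`: some
Pareto-dominated alternative receives probability at least `1/m` in some
profile. -/
theorem unilateralMix_zeroRandDict_not_expost (n m : ℕ) (hm : 3 ≤ m)
    (F : Profile n m → Fin m → ℝ) (hF : IsSDS F) (hsp : Strategyproof F)
    (hmix : MixOf IsUnilateral F) (hrd : RandDictDegree F 0) :
    ∃ (R : Profile n m) (x : Fin m),
      ParetoDominated R x ∧ 1 / (m : ℝ) ≤ F R x := by
  simpa using unilateralMix_zeroRandDict_not_expost_general (by omega) hmix hrd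
end
end

section
/- Let m ≥ 3. Every point voting SDS that is 0-randomly dictatorial and 1/m-ex post efficient is the uniform lottery, i.e., its scoring vector satisfies a_k = 1/(mn) for all k ∈ {1,…,m}. -/
open Finset

noncomputable section

/-!
Lowering the top score `a 0` to `a 1` removes the uniform random dictatorship with weight
`n * (a 0 - a 1)`, and what remains is a multiple of a point voting SDS, which is strategyproof by
the rearrangement inequality. So a `0`-randomly dictatorial point voting SDS has `a 0 = a 1`. If
all voters have the same preferences, the second-ranked alternative is Pareto-dominated and gets
probability `n * a 1`, so `1/m`-ex post efficiency bounds every score by `1/(mn)`, which is the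
average score.
-/

lemma sum_filter_lt_comp_equiv_le {α ι : Type*} [Fintype α] [LinearOrder ι] {𝕜 : Type*} [Ring 𝕜]
    [LinearOrder 𝕜] [IsStrictOrderedRing 𝕜] {s : ι → 𝕜} (hs : Antitone s) (σ τ : α ≃ ι)
    (x : α) :
    ∑ y with σ y < σ x, s (τ y) ≤ ∑ y with σ y < σ x, s (σ y) := by
  have hvary : Monovary (fun y => if σ y < σ x then (1 : 𝕜) else 0) (fun y => s (σ y)) := by
    intro y z hyz
    have hzy : σ z < σ y := hs.reflect_lt hyz
    dsimp only
    split_ifs with hy hz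
    · exact le_rfl
    · exact absurd (hzy.trans hy) hz
    · exact zero_le_one
    · exact le_rfl
  simpa [Finset.sum_filter] using
    hvary.sum_mul_comp_perm_le_sum_mul (σ := τ.trans σ.symm)

lemma dictProb_eq_ite {n m : ℕ} (R : Profile n m) (i : Fin n) (x : Fin m) :
    dictProb R i x = if (R i x : ℕ) = 0 then 1 else 0 := by
  have : NeZero m := ⟨x.pos.ne'⟩
  have htop : (∀ y, R i x ≤ R i y) ↔ (R i x : ℕ) = 0 := by
    rw [Fin.val_eq_zero_iff, ← bot_eq_zero, ← isBot_iff_eq_bot]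
    exact (R i).surjective.forall.symm
  simp only [dictProb, htop]

lemma isRandDict_uniformRD {n : ℕ} (m : ℕ) (hn : n ≠ 0) : IsRandDict (uniformRD n m) :=
  ⟨fun _ => 1 / n, fun _ => by positivity, by simp [hn], fun _ _ => Finset.mul_sum ..⟩

lemma IsRandDict.card_voters_ne_zero {n m : ℕ} {d : Profile n m → Fin m → ℝ}
    (hd : IsRandDict d) : n ≠ 0 := by
  rintro rfl
  obtain ⟨δ, -, hsum, -⟩ := hd
  simp at hsum

lemma RandDictDegree.card_voters_ne_zero {n m : ℕ} {F : Profile n m → Fin m → ℝ} {γ : ℝ}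
    (h : RandDictDegree F γ) : n ≠ 0 := by
  obtain ⟨-, -, ⟨d, -, hd, -⟩, -⟩ := h
  exact hd.card_voters_ne_zero

namespace PointVoting

variable {n m : ℕ}

/-- The point voting SDS whose scoring vector is proportional to `b`. -/
def ofScores (n : ℕ) (b : ℕ → ℝ) (hmono : ∀ k l : ℕ, k ≤ l → l < m → b l ≤ b k)
    (hnonneg : ∀ k < m, 0 ≤ b k) (hsum : ∑ k ∈ range m, b k ≠ 0) : PointVoting n m where
  a k := b k / (n * ∑ l ∈ range m, b l)
  mono k l hkl hl := by
    have hsum_nonneg : 0 ≤ ∑ l ∈ range m, b l := sum_nonneg fun k hk => hnonneg k (mem_range.1 hk)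
    gcongr
    exact hmono k l hkl hl
  nonneg k hk :=
    have hsum_nonneg : 0 ≤ ∑ l ∈ range m, b l := sum_nonneg fun k hk => hnonneg k (mem_range.1 hk)
    div_nonneg (hnonneg k hk) (by positivity)
  sum_eq := by rw [← sum_div, one_div, div_mul_cancel_right₀ hsum]

variable (pv : PointVoting n m)

lemma antitone_score : Antitone fun k : Fin m => pv.a k :=
  fun k l hkl => pv.mono k l hkl l.isLt

lemma strategyproof_pvVal : Strategyproof (pvVal pv) := by
  intro R R' i hR x
  simp only [pvVal]
  rw [sum_comm, sum_comm (s := {y | R i y < R i x}) (t := univ)]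
  refine sum_le_sum fun j _ => ?_
  obtain rfl | hj := eq_or_ne j i
  · exact sum_filter_lt_comp_equiv_le pv.antitone_score (R j) (R' j) x
  · rw [hR j hj]

lemma isSDS_pvVal (hn : n ≠ 0) : IsSDS (pvVal pv) := by
  refine ⟨fun R x => sum_nonneg fun i _ => pv.nonneg _ (R i x).isLt, fun R => ?_⟩
  have hvoter (i : Fin n) : ∑ x, pv.a (R i x) = 1 / n := by
    rw [Equiv.sum_comp (R i) fun k : Fin m => pv.a k, ← sum_range, pv.sum_eq]
  calc ∑ x, pvVal pv R x = ∑ i, ∑ x, pv.a (R i x) := sum_comm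
    _ = 1 := by simp [hvoter, hn]

/-- The weight of the uniform random dictatorship that splits off from `pv`. It is meaningful only
for `2 ≤ m`, since `pv.a 1` is arbitrary otherwise. -/
def dictWeight : ℝ := n * (pv.a 0 - pv.a 1)

/-- The scoring vector of `pv` with the top score lowered to the second one. It is what remains
after the uniform random dictatorship is split off, and is not normalized. -/
def flatScore (k : ℕ) : ℝ := pv.a (max k 1)

lemma flatScore_anti (hm : 1 < m) (k l : ℕ) (hkl : k ≤ l) (hl : l < m) :
    pv.flatScore l ≤ pv.flatScore k :=
  pv.mono _ _ (max_le_max_right 1 hkl) (max_lt hl hm)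

lemma flatScore_nonneg (hm : 1 < m) (k : ℕ) (hk : k < m) : 0 ≤ pv.flatScore k :=
  pv.nonneg _ (max_lt hk hm)

lemma card_voters_mul_sum_flatScore (hn : n ≠ 0) (hm : 0 < m) :
    n * ∑ k ∈ range m, pv.flatScore k = 1 - pv.dictWeight := by
  obtain ⟨m, rfl⟩ := Nat.exists_eq_add_one.2 hm
  have hsum : n * ∑ k ∈ range (m + 1), pv.a k = 1 := by rw [pv.sum_eq]; field_simp
  rw [sum_range_succ'] at hsum ⊢
  simp only [flatScore, dictWeight, le_add_iff_nonneg_left, zero_le, max_eq_left,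
    max_eq_right]
  linarith

lemma dictWeight_nonneg (hm : 1 < m) : 0 ≤ pv.dictWeight :=
  mul_nonneg n.cast_nonneg (sub_nonneg.2 (pv.mono 0 1 zero_le_one hm))

lemma dictWeight_le_one (hn : n ≠ 0) (hm : 1 < m) : pv.dictWeight ≤ 1 := by
  rw [← sub_nonneg, ← pv.card_voters_mul_sum_flatScore hn (by lia)]
  exact mul_nonneg n.cast_nonneg
    (sum_nonneg fun k hk => pv.flatScore_nonneg hm k (mem_range.1 hk))

lemma exists_flatScore_eq_mul (hn : n ≠ 0) (hm : 1 < m) :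
    ∃ q : PointVoting n m, ∀ k < m, pv.flatScore k = (1 - pv.dictWeight) * q.a k := by
  rw [← pv.card_voters_mul_sum_flatScore hn (by lia)]
  by_cases hsum : ∑ k ∈ range m, pv.flatScore k = 0
  · -- Here `pv` is the uniform random dictatorship, nothing remains, and any `q` works.
    have hzero := (sum_eq_zero_iff_of_nonneg fun k hk =>
      pv.flatScore_nonneg hm k (mem_range.1 hk)).1 hsum
    exact ⟨pv, fun k hk => by simp [hsum, hzero k (mem_range.2 hk)]⟩
  · refine ⟨ofScores n pv.flatScore (pv.flatScore_anti hm) (pv.flatScore_nonneg hm) hsum,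
      fun k _ => ?_⟩
    simp only [ofScores]
    field_simp

lemma pvVal_eq_dictWeight_mul_add (hn : n ≠ 0) (R : Profile n m) (x : Fin m) :
    pvVal pv R x = pv.dictWeight * uniformRD n m R x + ∑ i, pv.flatScore (R i x) := by
  have hscore (i : Fin n) :
      pv.a (R i x) = (pv.a 0 - pv.a 1) * dictProb R i x + pv.flatScore (R i x) := by
    rw [dictProb_eq_ite, flatScore]
    split_ifs with htop
    · simp [htop]
    · simp [Nat.one_le_iff_ne_zero.2 htop]
  simp only [pvVal, uniformRD, dictWeight, hscore, sum_add_distrib, ← mul_sum]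
  field_simp

lemma decomposesAt_dictWeight (hn : n ≠ 0) (hm : 1 < m) :
    DecomposesAt (pvVal pv) pv.dictWeight := by
  obtain ⟨q, hq⟩ := pv.exists_flatScore_eq_mul hn hm
  refine ⟨uniformRD n m, pvVal q, isRandDict_uniformRD m hn, q.isSDS_pvVal hn,
    q.strategyproof_pvVal, fun R x => ?_⟩
  rw [pv.pvVal_eq_dictWeight_mul_add hn, pvVal, mul_sum]
  simp only [hq _ (R _ x).isLt]

variable {pv}

lemma dictWeight_le_of_randDictDegree {γ : ℝ} (hm : 1 < m) (h : RandDictDegree (pvVal pv) γ) :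
    pv.dictWeight ≤ γ := by
  have hn := h.card_voters_ne_zero
  obtain ⟨-, -, -, hmax⟩ := h
  exact hmax _ (pv.dictWeight_nonneg hm) (pv.dictWeight_le_one hn hm)
    (pv.decomposesAt_dictWeight hn hm)

lemma card_voters_mul_a_one_le_of_exPostEff {β : ℝ} (hm : 1 < m) (h : ExPostEff (pvVal pv) β) :
    n * pv.a 1 ≤ β := by
  have hdom : ParetoDominated (fun _ : Fin n => Equiv.refl (Fin m)) ⟨1, hm⟩ :=
    ⟨⟨0, by lia⟩, fun _ => by simp⟩
  simpa [pvVal] using h _ _ hdom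

lemma a_eq_of_forall_le (hbound : ∀ k < m, pv.a k ≤ 1 / (m * n)) :
    ∀ k < m, pv.a k = 1 / (m * n) := by
  intro k hk
  have hm : m ≠ 0 := by lia
  have hsum : ∑ k ∈ range m, pv.a k = ∑ _k ∈ range m, 1 / ((m : ℝ) * n) := by
    rw [pv.sum_eq, sum_const, card_range, nsmul_eq_mul]
    field_simp
  exact (sum_eq_sum_iff_of_le fun k hk => hbound k (mem_range.1 hk)).1 hsum k (mem_range.2 hk)

end PointVoting

theorem pointVoting_uniform_general (n m : ℕ) (pv : PointVoting n m)
    (hrd : RandDictDegree (pvVal pv) 0) (heff : ExPostEff (pvVal pv) (1 / (m : ℝ))) :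
    ∀ k : ℕ, k < m → pv.a k = 1 / ((m : ℝ) * (n : ℝ)) := by
  refine PointVoting.a_eq_of_forall_le fun k hk => ?_
  obtain rfl | hm : m = 1 ∨ 1 < m := by lia
  · obtain rfl : k = 0 := by lia
    simpa using pv.sum_eq.le
  have hn : n ≠ 0 := hrd.card_voters_ne_zero
  have htop : n * (pv.a 0 - pv.a 1) ≤ 0 := PointVoting.dictWeight_le_of_randDictDegree hm hrd
  have hsecond : n * pv.a 1 ≤ 1 / m := PointVoting.card_voters_mul_a_one_le_of_exPostEff hm heff
  calc pv.a k ≤ pv.a 0 := pv.mono 0 k k.zero_le hk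
    _ ≤ 1 / m / n := by rw [le_div_iff₀' (by positivity)]; linarith
    _ = 1 / (m * n) := div_div ..

/-- For `m ≥ 3`, every point voting SDS that is `0`-randomly
dictatorial and `1/m`-ex post efficient is the uniform lottery, i.e. its
scoring vector is constant equal to `1/(mn)`. -/
theorem pointVoting_uniform (n m : ℕ) (hm : 3 ≤ m) (pv : PointVoting n m)
    (hrd : RandDictDegree (pvVal pv) 0)
    (heff : ExPostEff (pvVal pv) (1 / (m : ℝ))) :
    ∀ k : ℕ, k < m → pv.a k = 1 / ((m : ℝ) * (n : ℝ)) :=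
  pointVoting_uniform_general n m pv hrd heff
end
end
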